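/- For any v ∈ ℝ^n and any integer k with 1 ≤ k ≤ n, the k-th Lorenz component equals the optimal value of the dual linear program (DL_k): L_k(v) = max { k r − Σ_{i=1}^n d_i : r ∈ ℝ, d ∈ ℝ^n, d_i ≥ 0 and r − d_i ≤ v_i for all i }, and the maximum is attained at r = v^↑_k and d_i = max(v^↑_k − v_i, 0). -/

import Mathlib

/-- The vector `v` rearranged in nondecreasing order. -/
noncomputable def sortedVec {n : ℕ} (v : Fin n → ℝ) : Fin n → ℝ := v ∘ Tuple.sort v

/-- Ordered weighted average: `OWA_w(v) = ∑ₖ w_k v↑_k`. -/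
noncomputable def OWA {n : ℕ} (w v : Fin n → ℝ) : ℝ := ∑ k, w k * sortedVec v k

/-- `Lorenz v k` is the k-th Lorenz component, the sum of the k smallest components of v. -/
noncomputable def Lorenz {n : ℕ} (v : Fin n → ℝ) (k : ℕ) : ℝ :=
  ∑ i : Fin n, if (i : ℕ) < k then sortedVec v i else 0

/-- `wprime w k = w_k - w_{k+1}` with the convention `w_{n+1} = 0` (0-indexed). -/
noncomputable def wprime {n : ℕ} (w : Fin n → ℝ) (k : Fin n) : ℝ :=
  w k - (if h : (k : ℕ) + 1 < n then w ⟨(k : ℕ) + 1, h⟩ else 0)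

/-!
If `d ≥ 0` and `r - d i ≤ v i`, then summing over any set `s` of `k` indices gives
`k r - ∑ i, d i ≤ ∑ i ∈ s, v i`, which is weak duality when `s` carries the `k` smallest components.
Equality holds for `d i = (r - v i)⁺` as soon as the threshold `r` separates the values of `v` on
`s` from those off `s`, and the `k`-th smallest component is such a threshold.
-/

open Finset

section Duality

variable {ι M : Type*} [Fintype ι] [AddCommGroup M]

theorem card_nsmul_sub_sum_le_sum [PartialOrder M] [IsOrderedAddMonoid M] (s : Finset ι)
    {v d : ι → M} {r : M} (hd : ∀ i, 0 ≤ d i) (hv : ∀ i, r - d i ≤ v i) :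
    #s • r - ∑ i, d i ≤ ∑ i ∈ s, v i :=
  calc #s • r - ∑ i, d i
    _ ≤ #s • r - ∑ i ∈ s, d i :=
      sub_le_sub_left (sum_le_univ_sum_of_nonneg hd) _
    _ = ∑ i ∈ s, (r - d i) := by rw [sum_sub_distrib, sum_const]
    _ ≤ ∑ i ∈ s, v i := sum_le_sum fun i _ => hv i

theorem sum_eq_card_nsmul_sub_sum_posPart [Lattice M] [IsOrderedAddMonoid M] {s : Finset ι}
    {v : ι → M} {r : M} (hs : ∀ i ∈ s, v i ≤ r) (hsc : ∀ i ∉ s, r ≤ v i) :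
    ∑ i ∈ s, v i = #s • r - ∑ i, (r - v i)⁺ := by
  have sum_posPart : ∑ i, (r - v i)⁺ = ∑ i ∈ s, (r - v i) := by
    rw [← sum_subset (subset_univ s) fun i _ hi => posPart_of_nonpos (sub_nonpos.2 (hsc i hi))]
    exact sum_congr rfl fun i hi => posPart_of_nonneg (sub_nonneg.2 (hs i hi))
  rw [sum_posPart, sum_sub_distrib, sum_const, sub_sub_cancel]

end Duality

section SmallestIndices

variable {α : Type*} [LinearOrder α] {n : ℕ} (v : Fin n → α)

/-- The indices of the `k` smallest components of `v`, i.e. those in the first `k` positions of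
the sorted order, with ties broken as in `Tuple.sort`; all indices when `n ≤ k`. The `k`-th
Lorenz component is the sum of `v` over this set. -/
def smallestIndices (k : ℕ) : Finset (Fin n) :=
  ({j | (j : ℕ) < k} : Finset (Fin n)).map (Tuple.sort v).toEmbedding

theorem mem_smallestIndices {k : ℕ} {i : Fin n} :
    i ∈ smallestIndices v k ↔ ((Tuple.sort v).symm i : ℕ) < k := by
  rw [smallestIndices, mem_map_equiv, mem_filter_univ]

theorem card_smallestIndices {k : ℕ} (hkn : k ≤ n) : #(smallestIndices v k) = k := by
  rw [smallestIndices, card_map, Fin.card_filter_val_lt, min_eq_right hkn]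

theorem le_apply_sort_of_mem_smallestIndices {k : ℕ} {m i : Fin n}
    (hi : i ∈ smallestIndices v k) (hkm : k ≤ (m : ℕ) + 1) : v i ≤ v (Tuple.sort v m) := by
  have position_le : (Tuple.sort v).symm i ≤ m :=
    Nat.lt_succ_iff.1 (((mem_smallestIndices v).1 hi).trans_le hkm)
  simpa only [Function.comp_apply, Equiv.apply_symm_apply] using Tuple.monotone_sort v position_le

theorem apply_sort_le_of_notMem_smallestIndices {k : ℕ} {m i : Fin n}
    (hi : i ∉ smallestIndices v k) (hmk : (m : ℕ) ≤ k) : v (Tuple.sort v m) ≤ v i := by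
  have le_position : m ≤ (Tuple.sort v).symm i :=
    hmk.trans (not_lt.1 (mt (mem_smallestIndices v).2 hi))
  simpa only [Function.comp_apply, Equiv.apply_symm_apply] using Tuple.monotone_sort v le_position

end SmallestIndices

section Lorenz

variable {n : ℕ} (v : Fin n → ℝ)

theorem lorenz_eq_sum_smallestIndices (k : ℕ) :
    Lorenz v k = ∑ i ∈ smallestIndices v k, v i := by
  rw [smallestIndices, sum_map, sum_filter]
  rfl

theorem mul_sub_sum_le_lorenz {k : ℕ} (hkn : k ≤ n) {r : ℝ} {d : Fin n → ℝ}
    (hd : ∀ i, 0 ≤ d i) (hv : ∀ i, r - d i ≤ v i) : k * r - ∑ i, d i ≤ Lorenz v k := by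
  have weak_duality := card_nsmul_sub_sum_le_sum (smallestIndices v k) hd hv
  rwa [card_smallestIndices v hkn, nsmul_eq_mul, ← lorenz_eq_sum_smallestIndices] at weak_duality

theorem lorenz_succ_eq_mul_sub_sum_posPart (m : Fin n) :
    Lorenz v (m + 1) = (m + 1 : ℕ) * sortedVec v m - ∑ i, (sortedVec v m - v i)⁺ := by
  have below : ∀ i ∈ smallestIndices v (m + 1), v i ≤ sortedVec v m := fun _ hi =>
    le_apply_sort_of_mem_smallestIndices v hi le_rfl
  have above : ∀ i ∉ smallestIndices v (m + 1), sortedVec v m ≤ v i := fun _ hi =>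
    apply_sort_le_of_notMem_smallestIndices v hi (Nat.le_succ m)
  rw [lorenz_eq_sum_smallestIndices, sum_eq_card_nsmul_sub_sum_posPart below above,
    card_smallestIndices v m.is_lt, nsmul_eq_mul]

end Lorenz

/-- the k-th Lorenz component is the attained maximum of the dual LP
`max { k r - ∑ᵢ dᵢ : dᵢ ≥ 0, r - dᵢ ≤ vᵢ }`, attained at `r = v↑_k`,
`dᵢ = max(v↑_k - vᵢ, 0)`. -/
theorem stmt6 {n : ℕ} (v : Fin n → ℝ) (k : ℕ) (hk1 : 1 ≤ k) (hkn : k ≤ n) :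
    IsGreatest {s : ℝ | ∃ (r : ℝ) (d : Fin n → ℝ),
        (∀ i, 0 ≤ d i) ∧ (∀ i, r - d i ≤ v i) ∧ s = (k : ℝ) * r - ∑ i, d i}
      (Lorenz v k) ∧
    Lorenz v k = (k : ℝ) * sortedVec v ⟨k - 1, by omega⟩ -
      ∑ i, max (sortedVec v ⟨k - 1, by omega⟩ - v i) 0 := by
  have lorenz_eq := lorenz_succ_eq_mul_sub_sum_posPart v ⟨k - 1, by omega⟩
  simp only [Nat.sub_add_cancel hk1] at lorenz_eq
  refine ⟨⟨⟨_, _, fun _ => posPart_nonneg _, fun _ => sub_le_comm.1 (le_posPart _), lorenz_eq⟩,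
    ?_⟩, lorenz_eq⟩
  rintro _ ⟨r, d, hd, hv, rfl⟩
  exact mul_sub_sum_le_lorenz v hkn hd hv
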